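/- arXiv:2010.11814 — 2 statements merged into one kernel-verified Lean document; each statement's English description precedes it below -/
import Mathlib

section
/- Let X be a real normed linear space, let p ≥ 1, and let x, y ∈ X be nonzero. Write m = min{‖x‖,‖y‖}, M = max{‖x‖,‖y‖}, and Δ = |‖x‖^{p−1} − ‖y‖^{p−1}|. Then the following chain holds: ‖x−y‖·m^{p−1} − Δ·m ≤ ‖x−y‖·M^{p−1} − Δ·M ≤ ‖x‖^p + ‖y‖^p − (‖x‖+‖y‖−‖x−y‖)·M^{p−1} ≤ α_p[x,y] ≤ ‖x‖^p + ‖y‖^p − (‖x‖+‖y‖−‖x−y‖)·m^{p−1} = ‖x−y‖·m^{p−1} + Δ·M ≤ ‖x−y‖·M^{p−1} + Δ·m. -/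
noncomputable def alphaD {X : Type*} [NormedAddCommGroup X] [NormedSpace ℝ X]
    (p : ℝ) (x y : X) : ℝ :=
  ‖(‖x‖ ^ (p - 1)) • x - (‖y‖ ^ (p - 1)) • y‖

/-!
The vector `‖x‖ ^ (p - 1) • x - ‖y‖ ^ (p - 1) • y` is of the form `a • x - b • y`, and
`a • x - b • y = a • (x - y) + (a - b) • y = b • (x - y) + (a - b) • x`. Two triangle inequalities
then bound `α_p[x, y]` below by `‖x - y‖ * M ^ (p - 1) - Δ * m` and above by
`‖x - y‖ * m ^ (p - 1) + Δ * M`. For `1 ≤ p` one has `Δ = M ^ (p - 1) - m ^ (p - 1)`, which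
turns these bounds into the two expressions containing `‖x‖ ^ p + ‖y‖ ^ p`, and reduces the first
and the last inequality of the chain to `Δ * (M - m) ≤ Δ * ‖x - y‖`.
-/

section SMul

variable {𝕜 E : Type*} [SeminormedRing 𝕜] [SeminormedAddCommGroup E] [Module 𝕜 E]

theorem norm_smul_sub_smul_le [IsBoundedSMul 𝕜 E] (a b : 𝕜) (x y : E) :
    ‖a • x - b • y‖ ≤ ‖b‖ * ‖x - y‖ + ‖a - b‖ * ‖x‖ :=
  calc
    ‖a • x - b • y‖ = ‖b • (x - y) + (a - b) • x‖ := by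
      rw [smul_sub, sub_smul, sub_add_sub_cancel']
    _ ≤ ‖b • (x - y)‖ + ‖(a - b) • x‖ := norm_add_le _ _
    _ ≤ ‖b‖ * ‖x - y‖ + ‖a - b‖ * ‖x‖ := add_le_add (norm_smul_le _ _) (norm_smul_le _ _)

theorem norm_mul_norm_sub_sub_le_norm_smul_sub_smul [NormSMulClass 𝕜 E] (a b : 𝕜) (x y : E) :
    ‖a‖ * ‖x - y‖ - ‖a - b‖ * ‖y‖ ≤ ‖a • x - b • y‖ :=
  calc
    ‖a‖ * ‖x - y‖ - ‖a - b‖ * ‖y‖ = ‖a • (x - y)‖ - ‖(a - b) • y‖ := by simp only [norm_smul]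
    _ ≤ ‖a • (x - y) + (a - b) • y‖ := norm_sub_le_norm_add _ _
    _ = ‖a • x - b • y‖ := by rw [smul_sub, sub_smul, sub_add_sub_cancel]

end SMul

section AlphaD

variable {X : Type*} [NormedAddCommGroup X] [NormedSpace ℝ X] (p : ℝ) (x y : X)

theorem alphaD_comm : alphaD p x y = alphaD p y x :=
  norm_sub_rev _ _

theorem alphaD_le_norm_sub_mul_min_rpow_add :
    alphaD p x y ≤ ‖x - y‖ * min ‖x‖ ‖y‖ ^ (p - 1)
      + |‖x‖ ^ (p - 1) - ‖y‖ ^ (p - 1)| * max ‖x‖ ‖y‖ := by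
  wlog h : ‖y‖ ≤ ‖x‖ generalizing x y
  · rw [alphaD_comm, norm_sub_rev, abs_sub_comm, min_comm, max_comm]
    exact this y x (le_of_not_ge h)
  rw [max_eq_left h, min_eq_right h, mul_comm ‖x - y‖, alphaD]
  simpa only [Real.norm_of_nonneg (Real.rpow_nonneg (norm_nonneg y) _), Real.norm_eq_abs]
    using norm_smul_sub_smul_le (‖x‖ ^ (p - 1)) (‖y‖ ^ (p - 1)) x y

theorem norm_sub_mul_max_rpow_sub_le_alphaD :
    ‖x - y‖ * max ‖x‖ ‖y‖ ^ (p - 1) - |‖x‖ ^ (p - 1) - ‖y‖ ^ (p - 1)| * min ‖x‖ ‖y‖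
      ≤ alphaD p x y := by
  wlog h : ‖y‖ ≤ ‖x‖ generalizing x y
  · rw [alphaD_comm, norm_sub_rev, abs_sub_comm, min_comm, max_comm]
    exact this y x (le_of_not_ge h)
  rw [max_eq_left h, min_eq_right h, mul_comm ‖x - y‖, alphaD]
  simpa only [Real.norm_of_nonneg (Real.rpow_nonneg (norm_nonneg x) _), Real.norm_eq_abs]
    using norm_mul_norm_sub_sub_le_norm_smul_sub_smul (‖x‖ ^ (p - 1)) (‖y‖ ^ (p - 1)) x y

end AlphaD

section Rpow

variable {s t p : ℝ}

theorem abs_rpow_sub_rpow (hs : 0 ≤ s) (ht : 0 ≤ t) (hp : 0 ≤ p) :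
    |s ^ p - t ^ p| = max s t ^ p - min s t ^ p := by
  have hmono := Real.monotoneOn_rpow_Ici_of_exponent_nonneg hp
  rw [hmono.map_max hs ht, hmono.map_min hs ht, max_sub_min_eq_abs']

theorem rpow_add_rpow_eq_max_add_min (hs : 0 ≤ s) (ht : 0 ≤ t) (hp : p ≠ 0) :
    s ^ p + t ^ p = max s t ^ (p - 1) * max s t + min s t ^ (p - 1) * min s t := by
  have rpow_eq {r : ℝ} (hr : 0 ≤ r) : r ^ p = r ^ (p - 1) * r := by
    simpa only [Real.rpow_one] using Real.rpow_of_add_eq hr hp (sub_add_cancel p 1)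
  rw [← rpow_eq (le_max_of_le_left hs), ← rpow_eq (le_min hs ht)]
  exact (fn_max_add_fn_min (· ^ p) s t).symm

theorem rpow_add_rpow_sub_mul_max_rpow (hs : 0 ≤ s) (ht : 0 ≤ t) (hp : 1 ≤ p) (d : ℝ) :
    s ^ p + t ^ p - (s + t - d) * max s t ^ (p - 1)
      = d * max s t ^ (p - 1) - |s ^ (p - 1) - t ^ (p - 1)| * min s t := by
  rw [abs_rpow_sub_rpow hs ht (sub_nonneg.2 hp),
    rpow_add_rpow_eq_max_add_min hs ht (zero_lt_one.trans_le hp).ne', ← max_add_min s t]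
  ring

theorem rpow_add_rpow_sub_mul_min_rpow (hs : 0 ≤ s) (ht : 0 ≤ t) (hp : 1 ≤ p) (d : ℝ) :
    s ^ p + t ^ p - (s + t - d) * min s t ^ (p - 1)
      = d * min s t ^ (p - 1) + |s ^ (p - 1) - t ^ (p - 1)| * max s t := by
  rw [abs_rpow_sub_rpow hs ht (sub_nonneg.2 hp),
    rpow_add_rpow_eq_max_add_min hs ht (zero_lt_one.trans_le hp).ne', ← max_add_min s t]
  ring

end Rpow

theorem pAngular_bound_chain_p_ge_one
    {X : Type*} [NormedAddCommGroup X] [NormedSpace ℝ X]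
    (p : ℝ) (hp : 1 ≤ p) (x y : X) (hx : x ≠ 0) (hy : y ≠ 0)
    (m M Δ : ℝ) (hm : m = min ‖x‖ ‖y‖) (hM : M = max ‖x‖ ‖y‖)
    (hΔ : Δ = |‖x‖ ^ (p - 1) - ‖y‖ ^ (p - 1)|) :
    ‖x - y‖ * m ^ (p - 1) - Δ * m ≤ ‖x - y‖ * M ^ (p - 1) - Δ * M ∧
    ‖x - y‖ * M ^ (p - 1) - Δ * M
        ≤ ‖x‖ ^ p + ‖y‖ ^ p - (‖x‖ + ‖y‖ - ‖x - y‖) * M ^ (p - 1) ∧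
    ‖x‖ ^ p + ‖y‖ ^ p - (‖x‖ + ‖y‖ - ‖x - y‖) * M ^ (p - 1) ≤ alphaD p x y ∧
    alphaD p x y ≤ ‖x‖ ^ p + ‖y‖ ^ p - (‖x‖ + ‖y‖ - ‖x - y‖) * m ^ (p - 1) ∧
    ‖x‖ ^ p + ‖y‖ ^ p - (‖x‖ + ‖y‖ - ‖x - y‖) * m ^ (p - 1)
        = ‖x - y‖ * m ^ (p - 1) + Δ * M ∧
    ‖x - y‖ * m ^ (p - 1) + Δ * M ≤ ‖x - y‖ * M ^ (p - 1) + Δ * m := by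
  have hΔ_mul_sub : Δ * (M - m) ≤ Δ * ‖x - y‖ := by
    rw [hm, hM, max_sub_min_eq_abs', hΔ]
    exact mul_le_mul_of_nonneg_left (abs_norm_sub_norm_le x y) (abs_nonneg _)
  have hΔ_mul_norm : Δ * ‖x - y‖ = ‖x - y‖ * M ^ (p - 1) - ‖x - y‖ * m ^ (p - 1) := by
    rw [hΔ, hM, hm, abs_rpow_sub_rpow (norm_nonneg x) (norm_nonneg y) (sub_nonneg.2 hp)]
    ring
  have hΔ_mul_le : Δ * m ≤ Δ * M :=
    mul_le_mul_of_nonneg_left (hm ▸ hM ▸ min_le_max) (hΔ ▸ abs_nonneg _)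
  have hlower : ‖x‖ ^ p + ‖y‖ ^ p - (‖x‖ + ‖y‖ - ‖x - y‖) * M ^ (p - 1)
      = ‖x - y‖ * M ^ (p - 1) - Δ * m := by
    rw [hM, hm, hΔ, rpow_add_rpow_sub_mul_max_rpow (norm_nonneg x) (norm_nonneg y) hp]
  have hupper : ‖x‖ ^ p + ‖y‖ ^ p - (‖x‖ + ‖y‖ - ‖x - y‖) * m ^ (p - 1)
      = ‖x - y‖ * m ^ (p - 1) + Δ * M := by
    rw [hM, hm, hΔ, rpow_add_rpow_sub_mul_min_rpow (norm_nonneg x) (norm_nonneg y) hp]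
  rw [hlower, hupper]
  refine ⟨by linarith, by linarith, ?_, ?_, rfl, by linarith⟩
  · rw [hM, hm, hΔ]; exact norm_sub_mul_max_rpow_sub_le_alphaD p x y
  · rw [hM, hm, hΔ]; exact alphaD_le_norm_sub_mul_min_rpow_add p x y
end

section
/- Let X be a real inner product space, let p ∈ ℝ, and let x, y ∈ X be nonzero. If α[x,y] ≤ √2, then α_p[x,y] ≥ √((‖x‖^{2p} + ‖y‖^{2p})/2)·α[x,y], while if α[x,y] > √2, then α_p[x,y] ≤ √((‖x‖^{2p} + ‖y‖^{2p})/2)·α[x,y]. -/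
noncomputable def angularD {X : Type*} [NormedAddCommGroup X] [NormedSpace ℝ X]
    (x y : X) : ℝ :=
  ‖‖x‖⁻¹ • x - ‖y‖⁻¹ • y‖

/-!
For nonzero `x` and `y`, write `a = ‖x‖ ^ p`, `b = ‖y‖ ^ p` and `α = angularD x y`. Expanding the
norm of `a • u - b • v` for the unit vectors `u`, `v` in the directions of `x`, `y` gives
`(alphaD p x y) ^ 2 = (a - b) ^ 2 + a * b * α ^ 2`. Since `a * b` falls short of the mean
`(a ^ 2 + b ^ 2) / 2` by `(a - b) ^ 2 / 2`, the two squares being compared differ by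
`(a - b) ^ 2 * (1 - α ^ 2 / 2)`, whose sign is decided by comparing `α` with `√2`.
-/

section NormedSpace

variable {X : Type*} [NormedAddCommGroup X] [NormedSpace ℝ X]

theorem norm_rpow_sub_one_smul (p : ℝ) (x : X) :
    ‖x‖ ^ (p - 1) • x = ‖x‖ ^ p • ‖x‖⁻¹ • x := by
  rcases eq_or_ne x 0 with rfl | hx
  · simp
  · rw [smul_smul, Real.rpow_sub_one (norm_ne_zero_iff.mpr hx), div_eq_mul_inv]

theorem alphaD_eq_norm_smul_sub_smul (p : ℝ) (x y : X) :
    alphaD p x y = ‖‖x‖ ^ p • ‖x‖⁻¹ • x - ‖y‖ ^ p • ‖y‖⁻¹ • y‖ := by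
  rw [alphaD, norm_rpow_sub_one_smul, norm_rpow_sub_one_smul]

end NormedSpace

section InnerProductSpace

variable {X : Type*} [NormedAddCommGroup X] [InnerProductSpace ℝ X]

theorem norm_smul_sub_smul_sq (a b : ℝ) (u v : X) :
    ‖a • u - b • v‖ ^ 2 =
      (a - b) * (a * ‖u‖ ^ 2 - b * ‖v‖ ^ 2) + a * b * ‖u - v‖ ^ 2 := by
  rw [norm_sub_sq_real, norm_sub_sq_real, norm_smul, norm_smul, mul_pow, mul_pow,
    Real.norm_eq_abs, Real.norm_eq_abs, sq_abs, sq_abs, real_inner_smul_left,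
    real_inner_smul_right]
  ring

theorem alphaD_sq (p : ℝ) {x y : X} (hx : x ≠ 0) (hy : y ≠ 0) :
    alphaD p x y ^ 2 =
      (‖x‖ ^ p - ‖y‖ ^ p) ^ 2 + ‖x‖ ^ p * ‖y‖ ^ p * angularD x y ^ 2 := by
  have norm_u : ‖‖x‖⁻¹ • x‖ = 1 := norm_smul_inv_norm (𝕜 := ℝ) hx
  have norm_v : ‖‖y‖⁻¹ • y‖ = 1 := norm_smul_inv_norm (𝕜 := ℝ) hy
  rw [alphaD_eq_norm_smul_sub_smul, norm_smul_sub_smul_sq, norm_u, norm_v, angularD]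
  ring

theorem alphaD_sq_sub_quadraticMean_mul_angularD_sq (p : ℝ) {x y : X}
    (hx : x ≠ 0) (hy : y ≠ 0) :
    alphaD p x y ^ 2 -
        (√((‖x‖ ^ (2 * p) + ‖y‖ ^ (2 * p)) / 2) * angularD x y) ^ 2 =
      (‖x‖ ^ p - ‖y‖ ^ p) ^ 2 * (1 - angularD x y ^ 2 / 2) := by
  have rpow_two_mul (z : X) : ‖z‖ ^ (2 * p) = (‖z‖ ^ p) ^ 2 := by
    rw [mul_comm, Real.rpow_mul (norm_nonneg z), Real.rpow_two]
  rw [alphaD_sq p hx hy, mul_pow, Real.sq_sqrt (by positivity), rpow_two_mul, rpow_two_mul]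
  ring

end InnerProductSpace

theorem pAngular_quadratic_mean_bound
    {X : Type*} [NormedAddCommGroup X] [InnerProductSpace ℝ X]
    (p : ℝ) (x y : X) (hx : x ≠ 0) (hy : y ≠ 0) :
    (angularD x y ≤ Real.sqrt 2 →
      alphaD p x y
        ≥ Real.sqrt ((‖x‖ ^ (2 * p) + ‖y‖ ^ (2 * p)) / 2) * angularD x y) ∧
    (Real.sqrt 2 < angularD x y →
      alphaD p x y
        ≤ Real.sqrt ((‖x‖ ^ (2 * p) + ‖y‖ ^ (2 * p)) / 2) * angularD x y) := by
  have angularD_nonneg : 0 ≤ angularD x y := norm_nonneg _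
  have alphaD_nonneg : 0 ≤ alphaD p x y := norm_nonneg _
  have sq_sub_sq := alphaD_sq_sub_quadraticMean_mul_angularD_sq p hx hy
  constructor
  · intro h
    have angularD_sq_le : angularD x y ^ 2 ≤ 2 :=
      (Real.le_sqrt angularD_nonneg zero_le_two).mp h
    refine le_of_sq_le_sq ?_ alphaD_nonneg
    rw [← sub_nonneg, sq_sub_sq]
    exact mul_nonneg (sq_nonneg _) (by linarith)
  · intro h
    have le_angularD_sq : 2 < angularD x y ^ 2 := Real.lt_sq_of_sqrt_lt h
    refine le_of_sq_le_sq ?_ (mul_nonneg (Real.sqrt_nonneg _) angularD_nonneg)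
    rw [← sub_nonpos, sq_sub_sq]
    exact mul_nonpos_of_nonneg_of_nonpos (sq_nonneg _) (by linarith)
end
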